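/- Discrete terminated fixed point with positive gap. Let ω be a regular averaging kernel with Δ-discretization ω̂, and let (hf, hg) ∈ 𝒳² satisfy the strictly positive gap condition with A(hf, hg) < −Δ‖ω‖∞. Then there exist (0,1)-interpolating F, G ∈ Ψ whose restrictions to the lattice {x_i = iΔ} form a spatial fixed point of the one-sided termination of the discrete spatially coupled recursion: F(x_i) = 0 for x_i < 0, F(x_i) = hf((G ⊗ ω̂)(x_i)) for x_i ≥ 0, and G(x_i) = hg((F ⊗ ω̂)(x_i)) for all i. -/

import Mathlib

open MeasureTheory Filter Set

noncomputable section

/-- Convolution `(f ⊗ ω)(x) = ∫ y, f y · ω (x − y)`. -/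
def conv (f ω : ℝ → ℝ) (x : ℝ) : ℝ := ∫ y : ℝ, f y * ω (x - y)

/-- `ω` is an averaging kernel: even, nonnegative, of bounded variation, integrating to 1. -/
def IsAveragingKernel (ω : ℝ → ℝ) : Prop :=
  (∀ x, ω (-x) = ω x) ∧ (∀ x, 0 ≤ ω x) ∧ BoundedVariationOn ω Set.univ ∧
    MeasureTheory.Integrable ω ∧ (∫ x : ℝ, ω x) = 1

/-- The essential supremum `‖ω‖∞` of a kernel, as a real number. -/
def kerSup (ω : ℝ → ℝ) : ℝ := (eLpNorm ω ⊤ MeasureTheory.volume).toReal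

/-- `ω` is regular: for some `W ∈ (0,∞]`, it vanishes outside `[−W, W]` and is
positive on `(−W, W)` (the case `W = ∞` being that `ω` is everywhere positive). -/
def IsRegularKernel (ω : ℝ → ℝ) : Prop :=
  (∀ x, 0 < ω x) ∨
    ∃ W : ℝ, 0 < W ∧ (∀ x, W < |x| → ω x = 0) ∧ (∀ x, |x| < W → 0 < ω x)

/-- Membership in `𝒳`: nondecreasing self-maps of `[0,1]`. -/
def MemX (h : ℝ → ℝ) : Prop :=
  MonotoneOn h (Icc 0 1) ∧ MapsTo h (Icc 0 1) (Icc 0 1)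

/-- Left limit `h(u−)` of `h ∈ 𝒳` at `u ∈ [0,1]`, with the convention `h(0−) = 0`. -/
def lm (h : ℝ → ℝ) (u : ℝ) : ℝ := if u ≤ 0 then 0 else sSup (h '' Ico 0 u)

/-- Right limit `h(u+)` of `h ∈ 𝒳` at `u ∈ [0,1]`, with the convention `h(1+) = 1`. -/
def rm (h : ℝ → ℝ) (u : ℝ) : ℝ := if 1 ≤ u then 1 else sInf (h '' Ioc u 1)

/-- A canonical generalized inverse of `h ∈ 𝒳` (any valid inverse has the same integrals,
so the potential below is unambiguous). -/
def Xinv (h : ℝ → ℝ) (v : ℝ) : ℝ := sInf ({1} ∪ {u ∈ Icc (0:ℝ) 1 | v ≤ h u})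

/-- The potential `Φ(hf, hg; u, v) = ∫₀ᵘ hg⁻¹ + ∫₀ᵛ hf⁻¹ − u·v`. -/
def Pot (hf hg : ℝ → ℝ) (u v : ℝ) : ℝ :=
  (∫ x in (0:ℝ)..u, Xinv hg x) + (∫ x in (0:ℝ)..v, Xinv hf x) - u * v

/-- `A(hf, hg) = Φ(hf, hg; 1, 1)`. -/
def Agap (hf hg : ℝ → ℝ) : ℝ := Pot hf hg 1 1

/-- `(u,v)` is a crossing point of `(hf, hg)`:
`u ∈ [hg(v−), hg(v+)]` and `v ∈ [hf(u−), hf(u+)]`. -/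
def IsCrossing (hf hg : ℝ → ℝ) (u v : ℝ) : Prop :=
  u ∈ Icc (0:ℝ) 1 ∧ v ∈ Icc (0:ℝ) 1 ∧
    u ∈ Icc (lm hg v) (rm hg v) ∧ v ∈ Icc (lm hf u) (rm hf u)

/-- The strictly positive gap condition: there is a nontrivial crossing point, and every
nontrivial crossing point satisfies `Φ(hf, hg; u, v) > max {0, A(hf, hg)}`. -/
def StrictPosGap (hf hg : ℝ → ℝ) : Prop :=
  (∃ u v, IsCrossing hf hg u v ∧ ¬(u = 0 ∧ v = 0) ∧ ¬(u = 1 ∧ v = 1)) ∧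
    ∀ u v, IsCrossing hf hg u v → ¬(u = 0 ∧ v = 0) → ¬(u = 1 ∧ v = 1) →
      max 0 (Agap hf hg) < Pot hf hg u v

/-- Membership in `Ψ`: nondecreasing functions `ℝ → [0,1]`. -/
def MemPsi (f : ℝ → ℝ) : Prop := Monotone f ∧ ∀ x, f x ∈ Icc (0:ℝ) 1

/-- `f` is `(a,b)`-interpolating: limits `a` at `−∞` and `b` at `+∞`. -/
def Interpolates (f : ℝ → ℝ) (a b : ℝ) : Prop :=
  Filter.Tendsto f Filter.atBot (nhds a) ∧ Filter.Tendsto f Filter.atTop (nhds b)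

/-- The `Δ`-discretization `ω̂ᵢ = ∫_{(i−1/2)Δ}^{(i+1/2)Δ} ω(z) dz` of a kernel. -/
def dker (ω : ℝ → ℝ) (Δ : ℝ) (i : ℤ) : ℝ :=
  ∫ z in (((i : ℝ) - 1/2) * Δ)..(((i : ℝ) + 1/2) * Δ), ω z

/-- Discrete convolution `(f ⊗ ω̂)(xᵢ) = Σⱼ ω̂_{i−j} f(xⱼ)`. -/
def dconv (f : ℤ → ℝ) (ωh : ℤ → ℝ) (i : ℤ) : ℝ := ∑' j : ℤ, ωh (i - j) * f j

lemma Xinv_bdd (h : ℝ → ℝ) (v : ℝ) : BddBelow ({1} ∪ {u ∈ Icc (0:ℝ) 1 | v ≤ h u}) :=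
  ⟨0, by rintro x (hx | hx)
         · rw [mem_singleton_iff] at hx; rw [hx]; norm_num
         · exact hx.1.1⟩

lemma Xinv_mono (h : ℝ → ℝ) : Monotone (Xinv h) := by
  intro x y hxy
  refine csInf_le_csInf (Xinv_bdd h x) ⟨1, Or.inl rfl⟩ ?_
  rintro u (hu | hu)
  · exact Or.inl hu
  · exact Or.inr ⟨hu.1, hxy.trans hu.2⟩

lemma Xinv_nonneg (h : ℝ → ℝ) (v : ℝ) : 0 ≤ Xinv h v := by
  unfold Xinv
  refine le_csInf ⟨1, Or.inl rfl⟩ ?_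
  rintro x (hx | hx)
  · rw [mem_singleton_iff] at hx; rw [hx]; norm_num
  · exact hx.1.1

lemma Xinv_ii (h : ℝ → ℝ) (a b : ℝ) : IntervalIntegrable (Xinv h) volume a b :=
  (Xinv_mono h).intervalIntegrable

lemma Xinv_prim_nonneg (h : ℝ → ℝ) {u : ℝ} (hu : 0 ≤ u) : 0 ≤ ∫ x in (0:ℝ)..u, Xinv h x :=
  intervalIntegral.integral_nonneg hu (fun x _ => Xinv_nonneg h x)

lemma Xinv_prim_cont (h : ℝ → ℝ) : Continuous (fun u => ∫ x in (0:ℝ)..u, Xinv h x) :=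
  intervalIntegral.continuous_primitive (fun a b => Xinv_ii h a b) 0

lemma Xinv_le {h : ℝ → ℝ} {u x : ℝ} (hu : u ∈ Icc (0:ℝ) 1) (hx : x ≤ h u) : Xinv h x ≤ u :=
  csInf_le (Xinv_bdd h x) (Or.inr ⟨hu, hx⟩)

lemma le_Xinv {h : ℝ → ℝ} (hh : MemX h) {u x : ℝ} (hu : u ∈ Icc (0:ℝ) 1) (hx : h u < x) :
    u ≤ Xinv h x := by
  unfold Xinv
  refine le_csInf ⟨1, Or.inl rfl⟩ ?_
  rintro y (hy | hy)
  · rw [mem_singleton_iff] at hy; rw [hy]; exact hu.2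
  · by_contra hc
    have := hh.1 hy.1 hu (le_of_not_ge hc)
    linarith [hy.2]

lemma intlow {h : ℝ → ℝ} (hh : MemX h) {u w v : ℝ} (hu : u ∈ Icc (0:ℝ) 1) (hw : h u ≤ w)
    (hv : w ≤ v) : u * (v - w) ≤ (∫ x in (0:ℝ)..v, Xinv h x) - ∫ x in (0:ℝ)..w, Xinv h x := by
  rw [intervalIntegral.integral_interval_sub_left (Xinv_ii h _ _) (Xinv_ii h _ _)]
  have : ∫ x in w..v, u ≤ ∫ x in w..v, Xinv h x := by
    apply intervalIntegral.integral_mono_on_of_le_Ioo hv (by simp) (Xinv_ii h _ _)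
    intro x hx
    exact le_Xinv hh hu (hw.trans_lt hx.1)
  simpa [mul_comm] using this

lemma intup {h : ℝ → ℝ} {u w v : ℝ} (hu : u ∈ Icc (0:ℝ) 1) (hw : w ≤ h u)
    (hv : v ≤ w) : (∫ x in (0:ℝ)..w, Xinv h x) - (∫ x in (0:ℝ)..v, Xinv h x) ≤ u * (w - v) := by
  rw [intervalIntegral.integral_interval_sub_left (Xinv_ii h _ _) (Xinv_ii h _ _)]
  have : ∫ x in v..w, Xinv h x ≤ ∫ x in v..w, u := by
    apply intervalIntegral.integral_mono_on hv (Xinv_ii h _ _) (by simp)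
    intro x hx
    exact Xinv_le hu (hx.2.trans hw)
  simpa [mul_comm] using this

lemma key_post {h : ℝ → ℝ} (hh : MemX h) {v c δ : ℝ} (hδ : 0 < δ) (hc : c ∈ Icc (0:ℝ) 1)
    (hmin : ∀ w ∈ Icc (0:ℝ) 1, (∫ x in (0:ℝ)..v, Xinv h x) + δ * v - v * c ≤
      (∫ x in (0:ℝ)..w, Xinv h x) + δ * w - w * c) : v ≤ h c := by
  by_contra hlt
  push Not at hlt
  have h1 := hmin (h c) (hh.2 hc)
  have h2 := intlow hh hc le_rfl hlt.le
  have : 0 < δ * (v - h c) := mul_pos hδ (by linarith)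
  nlinarith

lemma h_le_lm {h : ℝ → ℝ} (hh : MemX h) {u x : ℝ} (hu : u ≤ 1) (hx : 0 ≤ x) (hxu : x < u) :
    h x ≤ lm h u := by
  unfold lm
  rw [if_neg (by linarith)]
  apply le_csSup
  · refine ⟨1, ?_⟩
    rintro _ ⟨y, hy, rfl⟩
    exact (hh.2 ⟨hy.1, by linarith [hy.2]⟩).2
  · exact ⟨x, ⟨hx, hxu⟩, rfl⟩

lemma lm_mono {h : ℝ → ℝ} (hh : MemX h) {u a : ℝ} (ha : a ≤ 1) (hua : u ≤ a) :
    lm h u ≤ lm h a := by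
  by_cases hu : u ≤ 0
  · have : lm h u = 0 := by simp [lm, hu]
    rw [this]
    by_cases h0 : a ≤ 0
    · simp [lm, h0]
    · push Not at h0
      exact (hh.2 ⟨le_rfl, zero_le_one⟩).1.trans (h_le_lm hh ha le_rfl h0)
  · push Not at hu
    have : lm h u = sSup (h '' Ico 0 u) := by simp [lm, not_le.2 hu]
    rw [this]
    refine csSup_le (show (h '' Ico 0 u).Nonempty from ⟨h 0, 0, ⟨le_rfl, hu⟩, rfl⟩) ?_
    rintro _ ⟨y, hy, rfl⟩
    exact h_le_lm hh ha hy.1 (hy.2.trans_le hua)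

lemma lm_le_one {h : ℝ → ℝ} (hh : MemX h) {u : ℝ} (hu1 : u ≤ 1) : lm h u ≤ 1 := by
  by_cases hu : u ≤ 0
  · simp [lm, hu]
  · push Not at hu
    have : lm h u = sSup (h '' Ico 0 u) := by simp [lm, not_le.2 hu]
    rw [this]
    refine csSup_le (show (h '' Ico 0 u).Nonempty from ⟨h 0, 0, ⟨le_rfl, hu⟩, rfl⟩) ?_
    rintro _ ⟨y, hy, rfl⟩
    exact (hh.2 ⟨hy.1, by linarith [hy.2]⟩).2

lemma half_cross {h : ℝ → ℝ} (hh : MemX h) {u v b : ℝ} (hu : u ∈ Icc (0:ℝ) 1)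
    (hv : v ∈ Icc (0:ℝ) b) (hb : b ≤ 1) (hlb : lm h u ≤ b)
    (hmin : ∀ w ∈ Icc (0:ℝ) b, (∫ x in (0:ℝ)..v, Xinv h x) - u * v ≤
      (∫ x in (0:ℝ)..w, Xinv h x) - u * w) : v ∈ Icc (lm h u) (rm h u) := by
  constructor
  · by_contra hlt
    push Not at hlt
    have hu0 : 0 < u := by
      by_contra h0
      rw [lm, if_pos (by linarith)] at hlt
      linarith [hv.1]
    have hl := hlt
    rw [lm, if_neg (by linarith)] at hl
    obtain ⟨_, ⟨y, hy, rfl⟩, hvy⟩ := exists_lt_of_lt_csSup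
      (show (h '' Ico 0 u).Nonempty from ⟨h 0, 0, ⟨le_rfl, hu0⟩, rfl⟩) hl
    have hy1 : y ∈ Icc (0:ℝ) 1 := ⟨hy.1, by linarith [hy.2, hu.2]⟩
    have h1 := hmin (h y) ⟨(hh.2 hy1).1, (h_le_lm hh hu.2 hy.1 hy.2).trans hlb⟩
    have h2 := intup hy1 le_rfl hvy.le
    have : 0 < (u - y) * (h y - v) := mul_pos (by linarith [hy.2]) (by linarith)
    nlinarith
  · by_contra hlt
    push Not at hlt
    have hu1 : u < 1 := by
      by_contra h0
      rw [rm, if_pos (by linarith)] at hlt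
      linarith [hv.2]
    rw [rm, if_neg (by linarith)] at hlt
    obtain ⟨_, ⟨y, hy, rfl⟩, hvy⟩ := exists_lt_of_csInf_lt
      (show (h '' Ioc u 1).Nonempty from ⟨h 1, 1, ⟨hu1, le_rfl⟩, rfl⟩) hlt
    have hy1 : y ∈ Icc (0:ℝ) 1 := ⟨by linarith [hy.1, hu.1], hy.2⟩
    have h1 := hmin (h y) ⟨(hh.2 hy1).1, hvy.le.trans hv.2⟩
    have h2 := intlow hh hy1 le_rfl hvy.le
    have : 0 < (y - u) * (v - h y) := mul_pos (by linarith [hy.1]) (by linarith)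
    nlinarith

lemma box_cross {hf hg : ℝ → ℝ} (hhf : MemX hf) (hhg : MemX hg) {a b u v : ℝ}
    (ha : a ≤ 1) (hb : b ≤ 1) (hla : lm hf a ≤ b) (hlb : lm hg b ≤ a)
    (hu : u ∈ Icc (0:ℝ) a) (hv : v ∈ Icc (0:ℝ) b)
    (hmin : ∀ u' ∈ Icc (0:ℝ) a, ∀ v' ∈ Icc (0:ℝ) b, Pot hf hg u v ≤ Pot hf hg u' v') :
    IsCrossing hf hg u v := by
  have hu1 : u ∈ Icc (0:ℝ) 1 := ⟨hu.1, hu.2.trans ha⟩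
  have hv1 : v ∈ Icc (0:ℝ) 1 := ⟨hv.1, hv.2.trans hb⟩
  refine ⟨hu1, hv1, ?_, ?_⟩
  · apply half_cross hhg hv1 hu ha ((lm_mono hhg hb hv.2).trans hlb)
    intro w hw
    have := hmin w hw v hv
    unfold Pot at this
    linarith [mul_comm u v, mul_comm w v]
  · apply half_cross hhf hu1 hv hb ((lm_mono hhf ha hu.2).trans hla)
    intro w hw
    have := hmin u hu w hw
    unfold Pot at this
    linarith

lemma Pot_cont (hf hg : ℝ → ℝ) : Continuous (fun p : ℝ × ℝ => Pot hf hg p.1 p.2) := by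
  unfold Pot
  exact (((Xinv_prim_cont hg).comp continuous_fst).add
    ((Xinv_prim_cont hf).comp continuous_snd)).sub (continuous_fst.mul continuous_snd)

lemma Pot_min (hf hg : ℝ → ℝ) {a b : ℝ} (ha : 0 ≤ a) (hb : 0 ≤ b) :
    ∃ u ∈ Icc (0:ℝ) a, ∃ v ∈ Icc (0:ℝ) b,
      ∀ u' ∈ Icc (0:ℝ) a, ∀ v' ∈ Icc (0:ℝ) b, Pot hf hg u v ≤ Pot hf hg u' v' := by
  obtain ⟨p, hp, hmin⟩ := (isCompact_Icc.prod isCompact_Icc).exists_isMinOn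
    (s := Icc (0:ℝ) a ×ˢ Icc (0:ℝ) b) ⟨(0, 0), ⟨le_rfl, ha⟩, ⟨le_rfl, hb⟩⟩
    (Pot_cont hf hg).continuousOn
  exact ⟨p.1, hp.1, p.2, hp.2, fun u' hu' v' hv' => hmin (show (u', v') ∈ _ from ⟨hu', hv'⟩)⟩

lemma Pot_zero (hf hg : ℝ → ℝ) : Pot hf hg 0 0 = 0 := by simp [Pot]

/-- The only point with potential at most `A` is `(1,1)`. -/
lemma eq_one_of_Pot_le {hf hg : ℝ → ℝ} (hhf : MemX hf) (hhg : MemX hg)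
    (hgap : StrictPosGap hf hg) (hA : Agap hf hg < 0) {u v : ℝ}
    (hu : u ∈ Icc (0:ℝ) 1) (hv : v ∈ Icc (0:ℝ) 1) (h : Pot hf hg u v ≤ Agap hf hg) :
    u = 1 ∧ v = 1 := by
  have key : ∀ u ∈ Icc (0:ℝ) 1, ∀ v ∈ Icc (0:ℝ) 1, Pot hf hg u v ≤ Agap hf hg →
      (∀ u' ∈ Icc (0:ℝ) 1, ∀ v' ∈ Icc (0:ℝ) 1, Pot hf hg u v ≤ Pot hf hg u' v') →
      u = 1 ∧ v = 1 := by
    intro u hu v hv hle hmin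
    have hc := box_cross hhf hhg le_rfl le_rfl (lm_le_one hhf le_rfl) (lm_le_one hhg le_rfl)
      hu hv hmin
    by_contra h11
    by_cases h00 : u = 0 ∧ v = 0
    · rw [h00.1, h00.2, Pot_zero] at hle
      linarith
    · have := hgap.2 u v hc h00 h11
      linarith [le_max_left 0 (Agap hf hg)]
  obtain ⟨u0, hu0, v0, hv0, hmin⟩ := Pot_min hf hg zero_le_one zero_le_one
  have h1 := hmin u hu v hv
  have h11 := key u0 hu0 v0 hv0 (h1.trans h) hmin
  apply key u hu v hv h
  intro u' hu' v' hv'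
  have := hmin u' hu' v' hv'
  rw [h11.1, h11.2] at this
  exact h.trans this

/-- `hg(0+) = 0`. -/
lemma small_at_zero {hf hg : ℝ → ℝ} (hhf : MemX hf) (hhg : MemX hg)
    (hgap : StrictPosGap hf hg) {r : ℝ} (hr : 0 < r) :
    ∃ w, 0 < w ∧ w ≤ 1 ∧ hg w < r := by
  by_contra hcon
  push Not at hcon
  obtain ⟨⟨a, b, hab, h00, h11⟩, hpos⟩ := hgap
  obtain ⟨ha, hb, ⟨hag, hag'⟩, ⟨hbf, hbf'⟩⟩ := hab
  have ha0 : 0 < a := by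
    by_contra hneg
    have ha0 : a = 0 := le_antisymm (not_lt.1 hneg) ha.1
    have hb0 : 0 < b := lt_of_le_of_ne hb.1 (fun h => h00 ⟨ha0, h.symm⟩)
    have h1 := h_le_lm hhg hb.2 (x := b / 2) (by linarith) (by linarith)
    have h2 := hcon (b / 2) (by linarith) (by linarith [hb.2])
    linarith
  have key : ∀ u ∈ Icc (0:ℝ) a, ∀ v ∈ Icc (0:ℝ) b, Pot hf hg u v ≤ 0 →
      (∀ u' ∈ Icc (0:ℝ) a, ∀ v' ∈ Icc (0:ℝ) b, Pot hf hg u v ≤ Pot hf hg u' v') →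
      u = 0 ∧ v = 0 := by
    intro u hu v hv hle hmin
    have hc := box_cross hhf hhg ha.2 hb.2 hbf hag hu hv hmin
    by_contra h0
    have h1 : ¬ (u = 1 ∧ v = 1) := by
      rintro ⟨rfl, rfl⟩
      exact h11 ⟨le_antisymm ha.2 hu.2, le_antisymm hb.2 hv.2⟩
    have := hpos u v hc h0 h1
    linarith [le_max_left 0 (Agap hf hg)]
  obtain ⟨u0, hu0, v0, hv0, hmin⟩ := Pot_min hf hg ha.1 hb.1
  have hP := hmin 0 ⟨le_rfl, ha.1⟩ 0 ⟨le_rfl, hb.1⟩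
  rw [Pot_zero] at hP
  have h0 := key u0 hu0 v0 hv0 hP hmin
  rw [h0.1, h0.2, Pot_zero] at hmin
  have hm0 : 0 < min r a := lt_min hr ha0
  have hz : Pot hf hg (min r a) 0 ≤ 0 := by
    simp only [Pot, intervalIntegral.integral_same, mul_zero, add_zero, sub_zero]
    apply le_of_forall_pos_le_add
    intro ε hε
    have := intup (h := hg) (u := min ε 1) (w := min r a) (v := 0)
      ⟨le_min hε.le zero_le_one, min_le_right _ _⟩
      ((min_le_left _ _).trans (hcon _ (lt_min hε one_pos) (min_le_right _ _))) hm0.le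
    simp only [intervalIntegral.integral_same, sub_zero] at this
    have h2 : min ε 1 * min r a ≤ ε * 1 :=
      mul_le_mul (min_le_left _ _) ((min_le_right _ _).trans ha.2) hm0.le hε.le
    linarith
  have := key (min r a) ⟨hm0.le, min_le_right _ _⟩ 0 ⟨le_rfl, hb.1⟩ hz
    (fun u' hu' v' hv' => hz.trans (hmin u' hu' v' hv'))
  linarith [this.1]

/-- Properties of the discrete kernel. -/
def KerProp (k : ℤ → ℝ) : Prop := (∀ i, 0 ≤ k i) ∧ (∀ i, k (-i) = k i) ∧ HasSum k 1

lemma dker_prop {ω : ℝ → ℝ} {Δ : ℝ} (hΔ : 0 < Δ) (hω : IsAveragingKernel ω) :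
    KerProp (dker ω Δ) := by
  obtain ⟨heven, hnn, -, hint, h1⟩ := hω
  refine ⟨?_, ?_, ?_⟩
  · intro i
    exact intervalIntegral.integral_nonneg (by nlinarith) (fun x _ => hnn x)
  · intro i
    unfold dker
    have : (∫ z in (((-i : ℤ) : ℝ) - 1/2) * Δ..(((-i : ℤ) : ℝ) + 1/2) * Δ, ω z)
        = ∫ z in (((-i : ℤ) : ℝ) - 1/2) * Δ..(((-i : ℤ) : ℝ) + 1/2) * Δ, ω (-z) := by
      simp only [heven]
    rw [this, intervalIntegral.integral_comp_neg]
    congr 1 <;> push_cast <;> ring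
  · have hi : Integrable (fun x => Δ * ω (Δ * x)) := (hint.comp_mul_left' hΔ.ne').const_mul Δ
    have hs := hi.hasSum_intervalIntegral (-(1/2))
    have e1 : ∫ x, Δ * ω (Δ * x) = 1 := by
      rw [integral_const_mul, Measure.integral_comp_mul_left, h1, abs_of_pos (inv_pos.2 hΔ)]
      simp [hΔ.ne']
    rw [e1] at hs
    have e2 : dker ω Δ = fun n : ℤ =>
        ∫ x in (-(1/2) + (n:ℝ))..(-(1/2) + (n:ℝ) + 1), Δ * ω (Δ * x) := by
      funext i
      rw [intervalIntegral.integral_const_mul, intervalIntegral.mul_integral_comp_mul_left]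
      unfold dker
      congr 1 <;> ring
    rw [e2]
    exact hs

lemma dconv_eq (f k : ℤ → ℝ) (i : ℤ) : dconv f k i = ∑' m : ℤ, k m * f (i - m) := by
  unfold dconv
  rw [← (Equiv.subLeft i).tsum_eq (fun m => k m * f (i - m))]
  simp

lemma dconv_summable' {k f : ℤ → ℝ} (hk : KerProp k) (hf : ∀ i, f i ∈ Icc (0:ℝ) 1) (i : ℤ) :
    Summable (fun m => k m * f (i - m)) :=
  Summable.of_nonneg_of_le (fun m => mul_nonneg (hk.1 m) (hf _).1)
    (fun m => mul_le_of_le_one_right (hk.1 m) (hf _).2) hk.2.2.summable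

lemma dconv_mono {k f g : ℤ → ℝ} (hk : KerProp k) (hf : ∀ i, f i ∈ Icc (0:ℝ) 1)
    (hg : ∀ i, g i ∈ Icc (0:ℝ) 1) (i i' : ℤ) (h : ∀ m, f (i - m) ≤ g (i' - m)) :
    dconv f k i ≤ dconv g k i' := by
  rw [dconv_eq, dconv_eq]
  exact (dconv_summable' hk hf i).tsum_le_tsum
    (fun m => mul_le_mul_of_nonneg_left (h m) (hk.1 m)) (dconv_summable' hk hg i')

lemma dconv_mem {k f : ℤ → ℝ} (hk : KerProp k) (hf : ∀ i, f i ∈ Icc (0:ℝ) 1) (i : ℤ) :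
    dconv f k i ∈ Icc (0:ℝ) 1 := by
  rw [dconv_eq]
  constructor
  · exact tsum_nonneg (fun m => mul_nonneg (hk.1 m) (hf _).1)
  · rw [← hk.2.2.tsum_eq]
    exact (dconv_summable' hk hf i).tsum_le_tsum
      (fun m => mul_le_of_le_one_right (hk.1 m) (hf _).2) hk.2.2.summable

lemma dconv_atBot {k f : ℤ → ℝ} (hk : KerProp k) (hf : ∀ i, f i ∈ Icc (0:ℝ) 1)
    (h0 : ∀ i < 0, f i = 0) : Tendsto (fun i => dconv f k i) atBot (nhds 0) := by
  simp only [dconv_eq]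
  have : (0:ℝ) = ∑' m : ℤ, (0:ℝ) := by simp
  rw [this]
  apply tendsto_tsum_of_dominated_convergence (bound := k) hk.2.2.summable
  · intro m
    apply tendsto_const_nhds.congr'
    filter_upwards [eventually_lt_atBot m] with i hi
    rw [h0 _ (by omega), mul_zero]
  · filter_upwards with i m
    rw [Real.norm_eq_abs, abs_of_nonneg (mul_nonneg (hk.1 m) (hf _).1)]
    exact mul_le_of_le_one_right (hk.1 m) (hf _).2

lemma ker_sum_le {k : ℤ → ℝ} (hk : KerProp k) (I : Finset ℤ) (i : ℤ) :
    ∑ j ∈ I, k (i - j) ≤ 1 := by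
  have h1 : HasSum (fun j => k (i - j)) 1 := (Equiv.subLeft i).hasSum_iff.2 hk.2.2
  exact sum_le_hasSum I (fun j _ => hk.1 _) h1

/-- For long windows, boundary losses are negligible. -/
lemma window_exists {k : ℤ → ℝ} (hk : KerProp k) {δ : ℝ} (hδ : 0 < δ) :
    ∃ I : Finset ℤ, (∀ i ∈ I, 0 ≤ i) ∧ 0 < I.card ∧
      (I.card : ℝ) - ∑ i ∈ I, ∑ j ∈ I, k (i - j) < δ * I.card := by
  obtain ⟨s, hs⟩ := ((tendsto_order.1 hk.2.2).1 (1 - δ / 2) (by linarith)).exists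
  obtain ⟨M, hM⟩ : ∃ M : ℕ, ∀ m ∈ s, m ∈ Finset.Icc (-(M:ℤ)) M := by
    refine ⟨s.sup Int.natAbs, fun m hm => ?_⟩
    have : m.natAbs ≤ s.sup Int.natAbs := Finset.le_sup (f := Int.natAbs) hm
    rw [Finset.mem_Icc]
    omega
  obtain ⟨n, hn⟩ := exists_nat_gt ((2 * M : ℝ) / (δ / 2))
  rw [div_lt_iff₀ (by linarith)] at hn
  set I : Finset ℤ := Finset.Ico 0 ((2 * M + n + 1 : ℕ) : ℤ) with hI
  set J : Finset ℤ := Finset.Ico (M : ℤ) ((M + n + 1 : ℕ) : ℤ) with hJ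
  have cI : (I.card : ℝ) = 2 * M + n + 1 := by
    have : I.card = 2 * M + n + 1 := by simp only [hI, Int.card_Ico]; omega
    rw [this]; push_cast; ring
  have cJ : (J.card : ℝ) = n + 1 := by
    have : J.card = n + 1 := by simp only [hJ, Int.card_Ico]; omega
    rw [this]; push_cast; ring
  refine ⟨I, fun i hi => (Finset.mem_Ico.1 hi).1, by
    simp only [hI, Int.card_Ico]; omega, ?_⟩
  have hrow : ∀ i ∈ J, 1 - δ / 2 ≤ ∑ j ∈ I, k (i - j) := by
    intro i hi
    have h2 : ∑ m ∈ s, k m ≤ ∑ j ∈ I, k (i - j) := by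
      have : ∑ m ∈ s, k m = ∑ j ∈ s.image (fun m => i - m), k (i - j) := by
        rw [Finset.sum_image (by intro a _ b _ h; simpa using h)]
        simp
      rw [this]
      apply Finset.sum_le_sum_of_subset_of_nonneg
      · intro j hj
        obtain ⟨m, hm, rfl⟩ := Finset.mem_image.1 hj
        have := Finset.mem_Icc.1 (hM m hm)
        have h3 := Finset.mem_Ico.1 hi
        rw [hI, Finset.mem_Ico]
        push_cast at h3 ⊢
        omega
      · intros; exact hk.1 _
    linarith
  have hS : ∑ i ∈ J, ∑ j ∈ I, k (i - j) ≤ ∑ i ∈ I, ∑ j ∈ I, k (i - j) := by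
    apply Finset.sum_le_sum_of_subset_of_nonneg
    · intro i hi
      have h3 := Finset.mem_Ico.1 hi
      rw [hI, Finset.mem_Ico]
      push_cast at h3 ⊢
      omega
    · intro i _ _
      exact Finset.sum_nonneg (fun j _ => hk.1 _)
  have h4 : (J.card : ℝ) * (1 - δ / 2) ≤ ∑ i ∈ J, ∑ j ∈ I, k (i - j) := by
    have := Finset.card_nsmul_le_sum J _ _ hrow
    simpa using this
  rw [cI]
  rw [cJ] at h4
  have hMn : (0:ℝ) ≤ M := Nat.cast_nonneg M
  nlinarith [mul_nonneg hδ.le hMn]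

/-- Window energy. -/
def En (hf hg : ℝ → ℝ) (k : ℤ → ℝ) (I : Finset ℤ) (δ : ℝ) (F G : ℤ → ℝ) : ℝ :=
  ∑ i ∈ I, ((∫ x in (0:ℝ)..(G i), Xinv hg x) + δ * G i)
    + ∑ j ∈ I, ((∫ x in (0:ℝ)..(F j), Xinv hf x) + δ * F j)
    - ∑ i ∈ I, ∑ j ∈ I, k (i - j) * (G i * F j)

lemma En_swap {hf hg : ℝ → ℝ} {k : ℤ → ℝ} (hk : KerProp k) (I : Finset ℤ) (δ : ℝ)
    (F G : ℤ → ℝ) : En hf hg k I δ F G = En hg hf k I δ G F := by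
  unfold En
  rw [Finset.sum_comm (s := I) (t := I)]
  have : ∀ i j : ℤ, k (j - i) = k (i - j) := fun i j => by rw [← hk.2.1, neg_sub]
  have e : ∑ y ∈ I, ∑ x ∈ I, k (x - y) * (G x * F y)
      = ∑ y ∈ I, ∑ x ∈ I, k (y - x) * (F y * G x) := by
    refine Finset.sum_congr rfl fun y _ => Finset.sum_congr rfl fun x _ => ?_
    rw [this, mul_comm (G x)]
  rw [e]
  ring

lemma En_cont (hf hg : ℝ → ℝ) (k : ℤ → ℝ) (I : Finset ℤ) (δ : ℝ) :
    Continuous (fun p : (ℤ → ℝ) × (ℤ → ℝ) => En hf hg k I δ p.1 p.2) := by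
  unfold En
  have h1 := Xinv_prim_cont hf
  have h2 := Xinv_prim_cont hg
  have c1 : ∀ i, Continuous (fun p : (ℤ → ℝ) × (ℤ → ℝ) => p.1 i) := fun i => by fun_prop
  have c2 : ∀ i, Continuous (fun p : (ℤ → ℝ) × (ℤ → ℝ) => p.2 i) := fun i => by fun_prop
  refine ((continuous_finsetSum _ fun i _ => ?_).add (continuous_finsetSum _ fun i _ => ?_)).sub
    (continuous_finsetSum _ fun i _ => continuous_finsetSum _ fun j _ => ?_)
  · exact (h2.comp (c2 i)).add (continuous_const.mul (c2 i))
  · exact (h1.comp (c1 i)).add (continuous_const.mul (c1 i))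
  · exact continuous_const.mul ((c2 i).mul (c1 j))

lemma dconv_window {k : ℤ → ℝ} (I : Finset ℤ) (F : ℤ → ℝ) (i : ℤ) :
    dconv (fun j => if j ∈ I then F j else 0) k i = ∑ j ∈ I, k (i - j) * F j := by
  unfold dconv
  rw [tsum_eq_sum (s := I)]
  · exact Finset.sum_congr rfl fun j hj => by simp [hj]
  · intro j hj; simp [hj]

lemma sum_update_aux (I : Finset ℤ) (φ : ℤ → ℝ → ℝ) (G : ℤ → ℝ) {i : ℤ} (hi : i ∈ I) (w : ℝ)
    (h : ∑ j ∈ I, φ j (G j) ≤ ∑ j ∈ I, φ j (Function.update G i w j)) : φ i (G i) ≤ φ i w := by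
  rw [← Finset.add_sum_erase I _ hi, 
    ← Finset.add_sum_erase I (fun j => φ j (Function.update G i w j)) hi] at h
  have e : ∑ x ∈ I.erase i, φ x (Function.update G i w x) = ∑ x ∈ I.erase i, φ x (G x) :=
    Finset.sum_congr rfl fun x hx => by simp [(Finset.mem_erase.1 hx).1]
  rw [e] at h
  simp only [Function.update_self] at h
  linarith

lemma En_min_G {hf hg : ℝ → ℝ} (hhg : MemX hg) {k : ℤ → ℝ} (hk : KerProp k)
    (I : Finset ℤ) {δ : ℝ} (hδ : 0 < δ) {F G : ℤ → ℝ} (hF : ∀ i, F i ∈ Icc (0:ℝ) 1)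
    (hG : ∀ i, G i ∈ Icc (0:ℝ) 1)
    (hmin : ∀ G' : ℤ → ℝ, (∀ i, G' i ∈ Icc (0:ℝ) 1) → En hf hg k I δ F G ≤ En hf hg k I δ F G')
    (i : ℤ) : (if i ∈ I then G i else 0) ≤
      hg (dconv (fun j => if j ∈ I then F j else 0) k i) := by
  have hmem := dconv_mem hk (f := fun j => if j ∈ I then F j else 0)
    (fun j => by split_ifs; exacts [hF j, ⟨le_rfl, zero_le_one⟩]) i
  by_cases hi : i ∈ I
  swap
  · rw [if_neg hi]; exact (hhg.2 hmem).1
  rw [if_pos hi]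
  apply key_post hhg hδ hmem
  rw [dconv_window]
  intro w hw
  have h1 := hmin (Function.update G i w) (fun j => by
    by_cases hj : j = i
    · subst hj; simpa using hw
    · simpa [hj] using hG j)
  have form : ∀ G' : ℤ → ℝ, En hf hg k I δ F G' =
      ∑ i ∈ I, ((∫ x in (0:ℝ)..(G' i), Xinv hg x) + δ * G' i - G' i * ∑ j ∈ I, k (i - j) * F j)
      + ∑ j ∈ I, ((∫ x in (0:ℝ)..(F j), Xinv hf x) + δ * F j) := by
    intro G'
    unfold En
    rw [Finset.sum_sub_distrib]
    have : ∑ i ∈ I, G' i * ∑ j ∈ I, k (i - j) * F j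
        = ∑ i ∈ I, ∑ j ∈ I, k (i - j) * (G' i * F j) := by
      refine Finset.sum_congr rfl fun i _ => ?_
      rw [Finset.mul_sum]
      exact Finset.sum_congr rfl fun j _ => by ring
    rw [this]; ring
  rw [form, form] at h1
  exact sum_update_aux I (fun i y => (∫ x in (0:ℝ)..y, Xinv hg x) + δ * y
    - y * ∑ j ∈ I, k (i - j) * F j) G hi w (by linarith)

lemma window_post {hf hg : ℝ → ℝ} (hhf : MemX hf) (hhg : MemX hg) (hA : Agap hf hg < 0)
    {k : ℤ → ℝ} (hk : KerProp k) {ε : ℝ} (hε : 0 < ε) :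
    ∃ F G : ℤ → ℝ, (∀ i, F i ∈ Icc (0:ℝ) 1) ∧ (∀ i, G i ∈ Icc (0:ℝ) 1) ∧
      (∀ i < 0, F i = 0) ∧ (∀ i, F i ≤ hf (dconv G k i)) ∧ (∀ i, G i ≤ hg (dconv F k i)) ∧
      ∃ i j, Pot hf hg (G i) (F j) ≤ Agap hf hg + ε := by
  obtain ⟨δ, hδ, hδε, hδA⟩ : ∃ δ : ℝ, 0 < δ ∧ 3 * δ ≤ ε ∧ Agap hf hg + 3 * δ < 0 :=
    ⟨min (ε / 3) (-Agap hf hg / 6), lt_min (by linarith) (by linarith),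
      by linarith [min_le_left (ε / 3) (-Agap hf hg / 6)],
      by linarith [min_le_right (ε / 3) (-Agap hf hg / 6)]⟩
  obtain ⟨I, hI0, hIc, hIS⟩ := window_exists hk hδ
  have hcpt : IsCompact (Set.pi univ (fun _ : ℤ => Icc (0:ℝ) 1)) :=
    isCompact_univ_pi fun _ => isCompact_Icc
  have h1mem : (fun _ : ℤ => (1:ℝ)) ∈ Set.pi univ (fun _ : ℤ => Icc (0:ℝ) 1) :=
    fun i _ => ⟨zero_le_one, le_rfl⟩
  obtain ⟨⟨F, G⟩, ⟨hF, hG⟩, hmin⟩ := (hcpt.prod hcpt).exists_isMinOn ⟨(_, _), h1mem, h1mem⟩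
    (En_cont hf hg k I δ).continuousOn
  have hF' : ∀ i, F i ∈ Icc (0:ℝ) 1 := fun i => hF i trivial
  have hG' : ∀ i, G i ∈ Icc (0:ℝ) 1 := fun i => hG i trivial
  have hmin' : ∀ F' G' : ℤ → ℝ, (∀ i, F' i ∈ Icc (0:ℝ) 1) → (∀ i, G' i ∈ Icc (0:ℝ) 1) →
      En hf hg k I δ F G ≤ En hf hg k I δ F' G' := fun F' G' a b =>
    hmin (show (F', G') ∈ _ from ⟨fun i _ => a i, fun i _ => b i⟩)
  have hz : (0:ℝ) ∈ Icc (0:ℝ) 1 := ⟨le_rfl, zero_le_one⟩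
  refine ⟨fun j => if j ∈ I then F j else 0, fun j => if j ∈ I then G j else 0,
    fun j => by dsimp only; split_ifs; exacts [hF' j, hz],
    fun j => by dsimp only; split_ifs; exacts [hG' j, hz], ?_, ?_, ?_, ?_⟩
  · intro i hi
    exact if_neg (fun h => by have := hI0 i h; omega)
  · intro i
    refine En_min_G (hf := hg) hhf hk I hδ hG' hF' (fun F' h' => ?_) i
    rw [En_swap hk I δ G F, En_swap hk I δ G F']
    exact hmin' F' G h' hG'
  · intro i
    exact En_min_G (hf := hf) hhg hk I hδ hF' hG' (fun G' h' => hmin' F G' hF' h') i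
  · by_contra hcon
    push Not at hcon
    set S := ∑ i ∈ I, ∑ j ∈ I, k (i - j) with hS
    have hSle : S ≤ I.card := by
      have : S ≤ ∑ i ∈ I, (1:ℝ) := Finset.sum_le_sum fun i _ => ker_sum_le hk I i
      simpa using this
    have hup := hmin' (fun _ => 1) (fun _ => 1) (fun _ => ⟨zero_le_one, le_rfl⟩)
      (fun _ => ⟨zero_le_one, le_rfl⟩)
    have e1 : En hf hg k I δ (fun _ => 1) (fun _ => 1) =
        I.card * (Agap hf hg + 1 + 2 * δ) - S := by
      simp only [En, Agap, Pot, Finset.sum_const, nsmul_eq_mul, mul_one, hS]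
      ring
    have hlow : ∑ i ∈ I, ∑ j ∈ I, k (i - j) * Pot hf hg (G i) (F j) ≤ En hf hg k I δ F G := by
      have a1 : ∑ i ∈ I, ∑ j ∈ I, k (i - j) * (∫ x in (0:ℝ)..(G i), Xinv hg x)
          ≤ ∑ i ∈ I, ((∫ x in (0:ℝ)..(G i), Xinv hg x) + δ * G i) := by
        refine Finset.sum_le_sum fun i _ => ?_
        rw [← Finset.sum_mul]
        have := mul_le_of_le_one_left (Xinv_prim_nonneg hg (hG' i).1) (ker_sum_le hk I i)
        linarith [mul_nonneg hδ.le (hG' i).1]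
      have a2 : ∑ i ∈ I, ∑ j ∈ I, k (i - j) * (∫ x in (0:ℝ)..(F j), Xinv hf x)
          ≤ ∑ j ∈ I, ((∫ x in (0:ℝ)..(F j), Xinv hf x) + δ * F j) := by
        rw [Finset.sum_comm]
        refine Finset.sum_le_sum fun j _ => ?_
        rw [← Finset.sum_mul]
        have e : ∑ i ∈ I, k (i - j) = ∑ i ∈ I, k (j - i) :=
          Finset.sum_congr rfl fun i _ => by rw [← hk.2.1, neg_sub]
        rw [e]
        have := mul_le_of_le_one_left (Xinv_prim_nonneg hf (hF' j).1) (ker_sum_le hk I j)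
        linarith [mul_nonneg hδ.le (hF' j).1]
      have e : ∑ i ∈ I, ∑ j ∈ I, k (i - j) * Pot hf hg (G i) (F j) =
          ∑ i ∈ I, ∑ j ∈ I, k (i - j) * (∫ x in (0:ℝ)..(G i), Xinv hg x)
          + ∑ i ∈ I, ∑ j ∈ I, k (i - j) * (∫ x in (0:ℝ)..(F j), Xinv hf x)
          - ∑ i ∈ I, ∑ j ∈ I, k (i - j) * (G i * F j) := by
        simp only [← Finset.sum_add_distrib, ← Finset.sum_sub_distrib]
        refine Finset.sum_congr rfl fun i _ => Finset.sum_congr rfl fun j _ => ?_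
        unfold Pot; ring
      rw [e]
      unfold En
      linarith
    have hlow2 : S * (Agap hf hg + 3 * δ) ≤
        ∑ i ∈ I, ∑ j ∈ I, k (i - j) * Pot hf hg (G i) (F j) := by
      rw [hS, Finset.sum_mul]
      refine Finset.sum_le_sum fun i hi => ?_
      rw [Finset.sum_mul]
      refine Finset.sum_le_sum fun j hj => ?_
      have := hcon i j
      simp only [if_pos hi, if_pos hj] at this
      exact mul_le_mul_of_nonneg_left (by linarith) (hk.1 _)
    have : (I.card : ℝ) * (Agap hf hg + 3 * δ) ≤ S * (Agap hf hg + 3 * δ) :=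
      mul_le_mul_of_nonpos_right hSle hδA.le
    rw [e1] at hup
    nlinarith

/-- Existence of the greatest fixed point on the lattice, with its properties. -/
lemma lattice_fp {hf hg : ℝ → ℝ} (hhf : MemX hf) (hhg : MemX hg)
    {k : ℤ → ℝ} (hk : KerProp k) :
    ∃ F G : ℤ → ℝ, (∀ i, F i ∈ Icc (0:ℝ) 1) ∧ (∀ i, G i ∈ Icc (0:ℝ) 1) ∧
      Monotone F ∧ Monotone G ∧ (∀ i < 0, F i = 0) ∧
      (∀ i, 0 ≤ i → F i = hf (dconv G k i)) ∧ (∀ i, G i = hg (dconv F k i)) ∧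
      ∀ F' G' : ℤ → ℝ, (∀ i, F' i ∈ Icc (0:ℝ) 1) → (∀ i, G' i ∈ Icc (0:ℝ) 1) →
        (∀ i < 0, F' i = 0) → (∀ i, F' i ≤ hf (dconv G' k i)) →
        (∀ i, G' i ≤ hg (dconv F' k i)) → ∀ i, F' i ≤ F i ∧ G' i ≤ G i := by
  have hz : (0:ℝ) ∈ Icc (0:ℝ) 1 := ⟨le_rfl, zero_le_one⟩
  set U : (ℤ → ℝ) → ℤ → ℝ := fun F i => hg (dconv F k i) with hU
  set T : (ℤ → ℝ) → ℤ → ℝ := fun F i => if i < 0 then 0 else hf (dconv (U F) k i) with hT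
  have Umem : ∀ F : ℤ → ℝ, (∀ i, F i ∈ Icc (0:ℝ) 1) → ∀ i, U F i ∈ Icc (0:ℝ) 1 :=
    fun F hF i => hhg.2 (dconv_mem hk hF i)
  have Tmem : ∀ F : ℤ → ℝ, (∀ i, F i ∈ Icc (0:ℝ) 1) → ∀ i, T F i ∈ Icc (0:ℝ) 1 := by
    intro F hF i
    simp only [hT]
    split_ifs
    · exact hz
    · exact hhf.2 (dconv_mem hk (Umem F hF) i)
  have hmono : ∀ h : ℝ → ℝ, MemX h → ∀ F F' : ℤ → ℝ, (∀ i, F i ∈ Icc (0:ℝ) 1) →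
      (∀ i, F' i ∈ Icc (0:ℝ) 1) → ∀ i i', (∀ m, F (i - m) ≤ F' (i' - m)) →
      h (dconv F k i) ≤ h (dconv F' k i') := fun h hh F F' hF hF' i i' hle =>
    hh.1 (dconv_mem hk hF i) (dconv_mem hk hF' i') (dconv_mono hk hF hF' i i' hle)
  have Umono : ∀ F F' : ℤ → ℝ, (∀ i, F i ∈ Icc (0:ℝ) 1) → (∀ i, F' i ∈ Icc (0:ℝ) 1) →
      (∀ i, F i ≤ F' i) → ∀ i, U F i ≤ U F' i := fun F F' hF hF' hle i =>
    hmono hg hhg F F' hF hF' i i (fun m => hle _)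
  have Tmono : ∀ F F' : ℤ → ℝ, (∀ i, F i ∈ Icc (0:ℝ) 1) → (∀ i, F' i ∈ Icc (0:ℝ) 1) →
      (∀ i, F i ≤ F' i) → ∀ i, T F i ≤ T F' i := by
    intro F F' hF hF' hle i
    simp only [hT]
    split_ifs
    · exact le_rfl
    · exact hmono hf hhf _ _ (Umem F hF) (Umem F' hF') i i (fun m => Umono F F' hF hF' hle _)
  let P : Set (ℤ → ℝ) := {F | (∀ i, F i ∈ Icc (0:ℝ) 1) ∧ ∀ i, F i ≤ T F i}
  have P0 : (fun _ => 0) ∈ P := ⟨fun _ => hz, fun i => (Tmem _ (fun _ => hz) i).1⟩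
  set Fs : ℤ → ℝ := fun i => sSup ((fun F : ℤ → ℝ => F i) '' P) with hFs
  have bdd : ∀ i, BddAbove ((fun F : ℤ → ℝ => F i) '' P) := fun i =>
    ⟨1, by rintro _ ⟨F, hF, rfl⟩; exact (hF.1 i).2⟩
  have le_Fs : ∀ F ∈ P, ∀ i, F i ≤ Fs i := fun F hF i => le_csSup (bdd i) ⟨F, hF, rfl⟩
  have Fs_le : ∀ i c, (∀ F ∈ P, F i ≤ c) → Fs i ≤ c := fun i c h =>
    csSup_le ⟨_, _, P0, rfl⟩ (by rintro _ ⟨F, hF, rfl⟩; exact h F hF)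
  have Fsmem : ∀ i, Fs i ∈ Icc (0:ℝ) 1 := fun i =>
    ⟨le_Fs _ P0 i, Fs_le i 1 fun F hF => (hF.1 i).2⟩
  have h1 : ∀ i, Fs i ≤ T Fs i := fun i => Fs_le i _ fun F hF =>
    (hF.2 i).trans (Tmono F Fs hF.1 Fsmem (le_Fs F hF) i)
  have h2 : ∀ i, T Fs i ≤ Fs i := le_Fs (T Fs) ⟨Tmem Fs Fsmem,
    Tmono Fs (T Fs) Fsmem (Tmem Fs Fsmem) h1⟩
  have heq : ∀ i, Fs i = T Fs i := fun i => le_antisymm (h1 i) (h2 i)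
  have hshift : ∀ i, Fs (i - 1) ≤ Fs i := by
    have hmem : ∀ i, (fun i => Fs (i - 1)) i ∈ Icc (0:ℝ) 1 := fun i => Fsmem _
    refine le_Fs (fun i => Fs (i - 1)) ⟨hmem, fun i => ?_⟩
    show Fs (i - 1) ≤ T (fun i => Fs (i - 1)) i
    by_cases hi : i - 1 < 0
    · rw [heq (i - 1)]
      have : T Fs (i - 1) = 0 := by simp only [hT, if_pos hi]
      rw [this]
      exact (Tmem _ hmem i).1
    · rw [heq (i - 1)]
      have hi' : ¬ i < 0 := by omega
      simp only [hT, if_neg hi, if_neg hi']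
      refine hmono hf hhf _ _ (Umem _ Fsmem) (Umem _ hmem) _ _ fun m => ?_
      refine hmono hg hhg _ _ Fsmem hmem _ _ fun m' => le_of_eq ?_
      congr 1; ring
  have Fmono : Monotone Fs := monotone_int_of_le_succ fun n => by
    simpa using hshift (n + 1)
  refine ⟨Fs, U Fs, Fsmem, Umem Fs Fsmem, Fmono, ?_, ?_, ?_, fun _ => rfl, ?_⟩
  · intro i i' hii
    exact hmono hg hhg _ _ Fsmem Fsmem _ _ fun m => Fmono (by omega)
  · intro i hi
    rw [heq]; simp only [hT, if_pos hi]
  · intro i hi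
    rw [heq]; simp only [hT, if_neg (not_lt.2 hi)]
  · intro F' G' hF' hG' h0 hle1 hle2
    have hP : F' ∈ P := by
      refine ⟨hF', fun i => ?_⟩
      simp only [hT]
      split_ifs with hi
      · exact (h0 i hi).le
      · exact (hle1 i).trans (hmono hf hhf _ _ hG' (Umem F' hF') _ _ fun m => hle2 _)
    intro i
    exact ⟨le_Fs F' hP i, (hle2 i).trans (Umono F' Fs hF' Fsmem (le_Fs F' hP) i)⟩

lemma interp_ext {Δ : ℝ} (hΔ : 0 < Δ) {f : ℤ → ℝ} (hm : Monotone f)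
    (hb : ∀ i, f i ∈ Icc (0:ℝ) 1) (h0 : Tendsto f atBot (nhds 0))
    (h1 : ∀ c < 1, ∃ i, c < f i) :
    MemPsi (fun x => f ⌊x / Δ⌋) ∧ Interpolates (fun x => f ⌊x / Δ⌋) 0 1 ∧
      ∀ i : ℤ, f ⌊(i : ℝ) * Δ / Δ⌋ = f i := by
  refine ⟨⟨?_, fun x => hb _⟩, ⟨?_, ?_⟩, ?_⟩
  · intro x y hxy
    exact hm (Int.floor_mono (by gcongr))
  · exact h0.comp (tendsto_floor_atBot.comp (tendsto_id.atBot_div_const hΔ))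
  · have : Tendsto f atTop (nhds 1) := by
      refine tendsto_order.2 ⟨fun c hc => ?_, fun c hc => ?_⟩
      · obtain ⟨i, hi⟩ := h1 c hc
        filter_upwards [eventually_ge_atTop i] with j hj
        exact hi.trans_le (hm hj)
      · exact Eventually.of_forall fun j => (hb j).2.trans_lt hc
    exact this.comp (tendsto_floor_atTop.comp (tendsto_id.atTop_div_const hΔ))
  · intro i
    rw [mul_div_assoc, div_self hΔ.ne', mul_one, Int.floor_intCast]

/-- **Discrete terminated fixed point with positive gap.** -/
theorem discrete_terminated_fixed_point
    (ω hf hg : ℝ → ℝ) (Δ : ℝ) (hΔ : 0 < Δ)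
    (hω : IsAveragingKernel ω) (hreg : IsRegularKernel ω)
    (hhf : MemX hf) (hhg : MemX hg)
    (hgap : StrictPosGap hf hg)
    (hA : Agap hf hg < -(Δ * kerSup ω)) :
    ∃ F G : ℝ → ℝ,
      MemPsi F ∧ MemPsi G ∧ Interpolates F 0 1 ∧ Interpolates G 0 1 ∧
      (∀ i : ℤ, (i : ℝ) * Δ < 0 → F ((i : ℝ) * Δ) = 0) ∧
      (∀ i : ℤ, 0 ≤ (i : ℝ) * Δ →
        F ((i : ℝ) * Δ) = hf (dconv (fun j => G ((j : ℝ) * Δ)) (dker ω Δ) i)) ∧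
      (∀ i : ℤ, G ((i : ℝ) * Δ) =
        hg (dconv (fun j => F ((j : ℝ) * Δ)) (dker ω Δ) i)) := by
  have hA0 : Agap hf hg < 0 := by
    have : 0 ≤ Δ * kerSup ω := mul_nonneg hΔ.le ENNReal.toReal_nonneg
    linarith
  have hk := dker_prop hΔ hω
  obtain ⟨F, G, hF, hG, mF, mG, F0, Feq, Geq, hmax⟩ := lattice_fp hhf hhg hk
  -- suprema
  have hbF : BddAbove (range F) := ⟨1, by rintro _ ⟨i, rfl⟩; exact (hF i).2⟩
  have hbG : BddAbove (range G) := ⟨1, by rintro _ ⟨i, rfl⟩; exact (hG i).2⟩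
  have hsup : (⨆ i, G i) = 1 ∧ (⨆ i, F i) = 1 := by
    have uS0 : 0 ≤ ⨆ i, G i := (hG 0).1.trans (le_ciSup hbG 0)
    have vS0 : 0 ≤ ⨆ i, F i := (hF 0).1.trans (le_ciSup hbF 0)
    have uS1 : (⨆ i, G i) ≤ 1 := ciSup_le fun i => (hG i).2
    have vS1 : (⨆ i, F i) ≤ 1 := ciSup_le fun i => (hF i).2
    obtain ⟨u, hu, v, hv, hmin⟩ := Pot_min hf hg uS0 vS0
    have hle : Pot hf hg u v ≤ Agap hf hg := by
      apply le_of_forall_pos_le_add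
      intro ε hε
      obtain ⟨F', G', hF', hG', h0, hl1, hl2, i, j, hij⟩ := window_post hhf hhg hA0 hk hε
      have hcmp := hmax F' G' hF' hG' h0 hl1 hl2
      exact (hmin (G' i) ⟨(hG' i).1, (hcmp i).2.trans (le_ciSup hbG i)⟩
        (F' j) ⟨(hF' j).1, (hcmp j).1.trans (le_ciSup hbF j)⟩).trans hij
    have h11 := eq_one_of_Pot_le hhf hhg hgap hA0 ⟨hu.1, hu.2.trans uS1⟩
      ⟨hv.1, hv.2.trans vS1⟩ hle
    exact ⟨le_antisymm uS1 (h11.1 ▸ hu.2), le_antisymm vS1 (h11.2 ▸ hv.2)⟩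
  have F1 : ∀ c < 1, ∃ i, c < F i := fun c hc => exists_lt_of_lt_ciSup (by rw [hsup.2]; exact hc)
  have G1 : ∀ c < 1, ∃ i, c < G i := fun c hc => exists_lt_of_lt_ciSup (by rw [hsup.1]; exact hc)
  have Fbot : Tendsto F atBot (nhds 0) := by
    apply tendsto_const_nhds.congr'
    filter_upwards [eventually_lt_atBot 0] with i hi
    exact (F0 i hi).symm
  have Gbot : Tendsto G atBot (nhds 0) := by
    refine tendsto_order.2 ⟨fun c hc => Eventually.of_forall fun i => hc.trans_le (hG i).1,
      fun r hr => ?_⟩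
    obtain ⟨w, hw0, hw1, hwr⟩ := small_at_zero hhf hhg hgap hr
    filter_upwards [(tendsto_order.1 (dconv_atBot hk hF F0)).2 w hw0] with i hi
    rw [Geq i]
    exact (hhg.1 (dconv_mem hk hF i) ⟨hw0.le, hw1⟩ hi.le).trans_lt hwr
  obtain ⟨pF, iF, eF⟩ := interp_ext hΔ mF hF Fbot F1
  obtain ⟨pG, iG, eG⟩ := interp_ext hΔ mG hG Gbot G1
  refine ⟨_, _, pF, pG, iF, iG, ?_, ?_, ?_⟩
  · intro i hi
    rw [eF]
    apply F0
    by_contra hc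
    have : (0:ℝ) ≤ i := by exact_mod_cast not_lt.1 hc
    nlinarith
  · intro i hi
    simp only [eF, eG]
    apply Feq
    by_contra hc
    have : (i:ℝ) < 0 := by exact_mod_cast not_le.1 hc
    nlinarith
  · intro i
    simp only [eF, eG]
    exact Geq i
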